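/- Let h be an integer, r ≥ 1, and α_1, …, α_r positive integers, with jα_l + h - l + 1 ≠ 0 for all 0 ≤ j ≤ n and 1 ≤ l ≤ r. For real q with 0 < q < 1 define β_n^{(h,r)}(w, q | α_1,…,α_r) = (1/(1-q)^n) Σ_{j=0}^{n} C(n,j)(-q^w)^j ∏_{l=1}^{r} (jα_l + h - l + 1)/[jα_l + h - l + 1], where [m] = (1-q^m)/(1-q). Then for every natural number w, lim_{q→1⁻} β_n^{(h,r)}(w, q | α_1,…,α_r) = B_n^{(r)}(w | α_1,…,α_r), the Barnes multiple Bernoulli polynomial defined by (∏_{j=1}^{r} α_j t/(e^{α_j t} - 1)) e^{wt} = Σ_{n≥0} B_n^{(r)}(w | α) t^n/n!. -/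

import Mathlib

open Finset Real Filter

/-- q-integer `[m] = (1-q^m)/(1-q)` for an integer exponent. -/
noncomputable def qint (q : ℝ) (m : ℤ) : ℝ := (1 - q ^ m) / (1 - q)

/-- The extended Changhee q-Bernoulli polynomial `β_n^{(h,r)}(w, q | α_1,…,α_r)`,
with the weights indexed by `l ∈ {0,…,r-1}` representing `α_{l+1}`. -/
noncomputable def changheeBetaPoly (q : ℝ) (h : ℤ) (r : ℕ) (α : ℕ → ℤ) (w : ℕ) (n : ℕ) : ℝ :=
  (1 / (1 - q) ^ n) *
    ∑ j ∈ Finset.range (n + 1),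
      (n.choose j : ℝ) * (-(q ^ w)) ^ j *
        ∏ l ∈ Finset.range r,
          (((j : ℤ) * α l + h - l : ℤ) : ℝ) / qint q ((j : ℤ) * α l + h - l)

/-! Put `q = e^s` and `φ(x) = x / (e^x - 1)`, and let
`G_s(u) = ∏_l φ(α_l u + (h - l) s) · e^{wu}`. The `j`-th summand of `β_n` is, up to sign and a
power of `φ(s)`, the binomial coefficient times `G_s(js)`. So the sum is the `n`-th forward
difference of `G_s` at `0` with step `s`, and the prefactor `(1 - q)^{-n}` turns it into a
difference quotient. Although `G_s` varies with the step, this quotient tends to `∂_u^n G_0(0)`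
because `G` is jointly smooth, and `G_0` is the generating function of the Barnes polynomials. -/

open Topology
open scoped ContDiff fwdDiff

lemma contDiff_iteratedDeriv_uncurry {𝕜 E F : Type*} [NontriviallyNormedField 𝕜]
    [NormedAddCommGroup E] [NormedSpace 𝕜 E] [NormedAddCommGroup F] [NormedSpace 𝕜 F]
    {f : E → 𝕜 → F} {m : ℕ∞} (n : ℕ) (hf : ContDiff 𝕜 (m + n) (Function.uncurry f)) :
    ContDiff 𝕜 m (fun p : E × 𝕜 => iteratedDeriv n (f p.1) p.2) := by
  induction n generalizing m with
  | zero => simpa [Function.uncurry_def] using hf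
  | succ n ih =>
    have hn : ContDiff 𝕜 (m + 1) (fun p : E × 𝕜 => iteratedDeriv n (f p.1) p.2) :=
      mod_cast ih (m := m + 1) (by convert hf using 1; push_cast; ring)
    simp only [iteratedDeriv_succ, ← fderiv_apply_one_eq_deriv]
    refine ContDiff.fderiv_apply (f := fun p : E × 𝕜 => iteratedDeriv n (f p.1)) (m := m + 1)
      ?_ contDiff_snd contDiff_const le_rfl
    exact hn.comp (contDiff_fst.fst.prodMk contDiff_snd)

lemma exists_sub_eq_mul_deriv {f : ℝ → ℝ} (hf : Differentiable ℝ f) (x s : ℝ) :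
    ∃ t ∈ Set.Icc (0 : ℝ) 1, f (x + s) - f x = s * deriv f (x + t * s) := by
  obtain ⟨y, hy, hfy⟩ := domain_mvt
    (fun y _ => (hf y).hasDerivAt.hasFDerivAt.hasFDerivWithinAt) convex_univ
    (Set.mem_univ x) (Set.mem_univ (x + s))
  rw [segment_eq_image'] at hy
  obtain ⟨t, ht, rfl⟩ := hy
  exact ⟨t, ht, by simpa using hfy⟩

lemma iteratedDeriv_fwdDiff {𝕜 F : Type*} [NontriviallyNormedField 𝕜] [NormedAddCommGroup F]
    [NormedSpace 𝕜 F] {n : ℕ} {f : 𝕜 → F} (hf : ContDiff 𝕜 n f) (s : 𝕜) :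
    iteratedDeriv n (Δ_[s] f) = Δ_[s] (iteratedDeriv n f) := by
  ext x
  have hshift : ContDiff 𝕜 n fun y => f (y + s) := hf.comp (contDiff_id.add contDiff_const)
  unfold fwdDiff
  rw [iteratedDeriv_fun_sub hshift.contDiffAt hf.contDiffAt, iteratedDeriv_comp_add_const]

lemma exists_fwdDiff_iter_eq_pow_mul_iteratedDeriv {n : ℕ} {f : ℝ → ℝ} (hf : ContDiff ℝ n f)
    (x s : ℝ) :
    ∃ t ∈ Set.Icc (0 : ℝ) n, (Δ_[s])^[n] f x = s ^ n * iteratedDeriv n f (x + t * s) := by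
  induction n generalizing f with
  | zero => exact ⟨0, by simp⟩
  | succ n ih =>
    have hfn : ContDiff ℝ n f := hf.of_le (by exact_mod_cast n.le_succ)
    obtain ⟨t, ht, hdiff⟩ :=
      ih (f := Δ_[s] f) ((hfn.comp (contDiff_id.add contDiff_const)).sub hfn)
    obtain ⟨u, hu, hmvt⟩ := exists_sub_eq_mul_deriv
      (hf.differentiable_iteratedDeriv n (by exact_mod_cast n.lt_succ_self)) (x + t * s) s
    refine ⟨t + u, ⟨add_nonneg ht.1 hu.1, ?_⟩, ?_⟩
    · push_cast
      exact add_le_add ht.2 hu.2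
    · rw [Function.iterate_succ_apply, hdiff, iteratedDeriv_fwdDiff hfn, fwdDiff, hmvt,
        iteratedDeriv_succ, add_mul, add_assoc, pow_succ, mul_assoc]

lemma tendsto_fwdDiff_iter_div_pow {n : ℕ} {G : ℝ → ℝ → ℝ}
    (hG : ContDiff ℝ n (Function.uncurry G)) (x : ℝ) :
    Tendsto (fun s => (Δ_[s])^[n] (G s) x / s ^ n) (𝓝[≠] 0) (𝓝 (iteratedDeriv n (G 0) x)) := by
  have hslice (s : ℝ) : ContDiff ℝ n (G s) := hG.comp (contDiff_const.prodMk contDiff_id)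
  choose t ht hdiff using fun s =>
    exists_fwdDiff_iter_eq_pow_mul_iteratedDeriv (hslice s) x s
  have hcont : Continuous fun p : ℝ × ℝ => iteratedDeriv n (G p.1) p.2 :=
    (contDiff_iteratedDeriv_uncurry (m := 0) n (by simpa using hG)).continuous
  have hts : Tendsto (fun s => t s * s) (𝓝 0) (𝓝 0) := by
    refine bdd_le_mul_tendsto_zero' n (Eventually.of_forall fun s => ?_) tendsto_id
    exact abs_le.2 ⟨by linarith [(ht s).1, (ht s).2], (ht s).2⟩
  have hpoint : Tendsto (fun s => (s, x + t s * s)) (𝓝 0) (𝓝 (0, x)) := by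
    simpa using tendsto_id.prodMk_nhds (hts.const_add x)
  refine (((hcont.tendsto (0, x)).comp hpoint).mono_left nhdsWithin_le_nhds).congr' ?_
  filter_upwards [self_mem_nhdsWithin] with s hs
  rw [hdiff, mul_div_cancel_left₀ _ (pow_ne_zero n hs), Function.comp_apply]

lemma iteratedDeriv_zero_eq_of_hasSum {𝕜 : Type*} [NontriviallyNormedField 𝕜] [CompleteSpace 𝕜]
    [CharZero 𝕜] {f : 𝕜 → 𝕜} {b : ℕ → 𝕜} (hf : ContinuousAt f 0)
    (hb : ∀ᶠ t in 𝓝[≠] 0, HasSum (fun m => b m * t ^ m / m.factorial) (f t)) (n : ℕ) :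
    iteratedDeriv n f 0 = b n := by
  classical
  let p : FormalMultilinearSeries 𝕜 𝕜 𝕜 := .ofScalars 𝕜 fun m => b m / m.factorial
  let g : 𝕜 → 𝕜 := Function.update f 0 (b 0)
  have hg : HasFPowerSeriesAt g p 0 := by
    rw [hasFPowerSeriesAt_iff]
    filter_upwards [eventually_nhdsWithin_iff.1 hb] with t ht
    have hterm (m : ℕ) : b m * t ^ m / m.factorial = t ^ m • p.coeff m := by
      rw [FormalMultilinearSeries.coeff_ofScalars, smul_eq_mul, mul_comm (b m), mul_div_assoc]
    simp only [zero_add, ← hterm]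
    rcases eq_or_ne t 0 with rfl | ht0
    · simpa [g] using hasSum_single (f := fun m => b m * (0 : 𝕜) ^ m / m.factorial) 0
        fun m hm => by simp [hm]
    · simpa [g, ht0] using ht ht0
  have hgf : g =ᶠ[𝓝 0] f :=
    (hg.continuousAt.eventuallyEq_nhds_iff_eventuallyEq_nhdsNE hf).1
      (eventually_mem_nhdsWithin.mono fun t ht => Function.update_of_ne ht _ _)
  have hfp := hg.congr hgf
  have hcoeff := congrArg (fun p => p.coeff n)
    (hfp.analyticAt.hasFPowerSeriesAt.eq_formalMultilinearSeries hfp)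
  simpa [p, FormalMultilinearSeries.coeff_ofScalars, div_left_inj', Nat.factorial_ne_zero]
    using hcoeff

/-- The generating function `x / (e^x - 1)` of the Bernoulli numbers, with its removable
singularity at `0` filled in by means of `dslope`. -/
noncomputable def bernoulliKernel (x : ℝ) : ℝ := (dslope Real.exp 0 x)⁻¹

lemma bernoulliKernel_of_ne {x : ℝ} (hx : x ≠ 0) : bernoulliKernel x = x / (Real.exp x - 1) := by
  simp [bernoulliKernel, dslope_of_ne _ hx, slope_def_field]

lemma bernoulliKernel_zero : bernoulliKernel 0 = 1 := by
  simp [bernoulliKernel]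

lemma dslope_exp_zero_ne_zero (x : ℝ) : dslope Real.exp 0 x ≠ 0 := by
  rcases eq_or_ne x 0 with rfl | hx
  · simp
  · simp [dslope_of_ne _ hx, slope_def_field, hx, sub_eq_zero]

lemma contDiff_dslope_exp_zero : ContDiff ℝ ∞ (dslope Real.exp 0) := by
  refine contDiff_iff_contDiffAt.2 fun x => ?_
  rcases eq_or_ne x 0 with rfl | hx
  · obtain ⟨p, hp⟩ : AnalyticAt ℝ Real.exp 0 := analyticAt_rexp
    exact hp.has_fpower_series_dslope_fslope.analyticAt.contDiffAt
  · refine ContDiffAt.congr_of_eventuallyEq ?_ (dslope_eventuallyEq_slope_of_ne Real.exp hx)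
    simp only [slope_fun_def_field]
    exact (Real.contDiff_exp.sub contDiff_const).contDiffAt.div
      (contDiff_id.sub contDiff_const).contDiffAt (sub_ne_zero.2 hx)

lemma contDiff_bernoulliKernel : ContDiff ℝ ∞ bernoulliKernel :=
  contDiff_dslope_exp_zero.inv dslope_exp_zero_ne_zero

lemma intCast_div_qint_exp {s : ℝ} (hs : s ≠ 0) {m : ℤ} (hm : m ≠ 0) :
    (m : ℝ) / qint (Real.exp s) m = bernoulliKernel (m * s) / bernoulliKernel s := by
  have hms : (m : ℝ) * s ≠ 0 := mul_ne_zero (Int.cast_ne_zero.2 hm) hs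
  have hexp : Real.exp s ^ m = Real.exp (m * s) := by
    rw [mul_comm, Real.exp_mul, Real.rpow_intCast]
  rw [qint, hexp, bernoulliKernel_of_ne hms, bernoulliKernel_of_ne hs,
    ← neg_sub (Real.exp _), ← neg_sub (Real.exp s), neg_div_neg_eq]
  field_simp

/-- The function `u ↦ ∏_{l < r} φ(a_l u + b_l s) · e^{xu}` with `φ = bernoulliKernel`: at `s = 0` it
is the generating function of the Barnes polynomials with weights `a`, and at `s = log q` it
interpolates the summands of the Changhee polynomials. -/
noncomputable def barnesGen (r : ℕ) (a b : ℕ → ℝ) (x s u : ℝ) : ℝ :=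
  (∏ l ∈ range r, bernoulliKernel (a l * u + b l * s)) * Real.exp (x * u)

lemma contDiff_uncurry_barnesGen (r : ℕ) (a b : ℕ → ℝ) (x : ℝ) :
    ContDiff ℝ ∞ (Function.uncurry (barnesGen r a b x)) := by
  have := contDiff_bernoulliKernel
  unfold barnesGen Function.uncurry
  fun_prop

lemma barnesGen_zero_of_ne {r : ℕ} {a : ℕ → ℝ} (ha : ∀ l ∈ range r, a l ≠ 0) (b : ℕ → ℝ)
    (x : ℝ) {u : ℝ} (hu : u ≠ 0) :
    barnesGen r a b x 0 u =
      (∏ l ∈ range r, a l * u / (Real.exp (a l * u) - 1)) * Real.exp (x * u) := by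
  refine congrArg (· * Real.exp (x * u)) (prod_congr rfl fun l hl => ?_)
  rw [mul_zero, add_zero, bernoulliKernel_of_ne (mul_ne_zero (ha l hl) hu)]

lemma exp_pow_mul_prod_intCast_div_qint {h : ℤ} {r : ℕ} {α : ℕ → ℤ} {j : ℕ}
    (hnz : ∀ l ∈ range r, (j : ℤ) * α l + h - l ≠ 0) (w : ℕ) {s : ℝ} (hs : s ≠ 0) :
    (Real.exp s ^ w) ^ j * ∏ l ∈ range r,
        (((j : ℤ) * α l + h - l : ℤ) : ℝ) / qint (Real.exp s) ((j : ℤ) * α l + h - l) =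
      barnesGen r (fun l => α l) (fun l => h - l) w s (j * s) / bernoulliKernel s ^ r := by
  have hexp : (Real.exp s ^ w) ^ j = Real.exp (w * (j * s)) := by
    rw [← Real.exp_nat_mul, ← Real.exp_nat_mul, mul_left_comm]
  have hfactor : ∀ l ∈ range r,
      (((j : ℤ) * α l + h - l : ℤ) : ℝ) / qint (Real.exp s) ((j : ℤ) * α l + h - l) =
        bernoulliKernel (α l * (j * s) + (h - l) * s) / bernoulliKernel s := by
    intro l hl
    rw [intCast_div_qint_exp hs (hnz l hl)]
    congr 2
    push_cast
    ring
  rw [prod_congr rfl hfactor, prod_div_distrib, prod_const, card_range, barnesGen, hexp, mul_comm,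
    div_mul_eq_mul_div]

lemma changheeBetaPoly_exp {h : ℤ} {r : ℕ} {α : ℕ → ℤ} {n : ℕ}
    (hnz : ∀ j : ℕ, j ≤ n → ∀ l ∈ range r, (j : ℤ) * α l + h - l ≠ 0) (w : ℕ)
    {s : ℝ} (hs : s ≠ 0) :
    changheeBetaPoly (Real.exp s) h r α w n =
      bernoulliKernel s ^ n / bernoulliKernel s ^ r *
        ((Δ_[s])^[n] (barnesGen r (fun l => α l) (fun l => h - l) w s) 0 / s ^ n) := by
  set G := barnesGen r (fun l => α l) (fun l => h - l) w s
  have hprefactor : 1 / (1 - Real.exp s) ^ n = (-1) ^ n * (bernoulliKernel s ^ n / s ^ n) := by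
    rw [bernoulliKernel_of_ne hs, ← neg_sub, neg_pow]
    field_simp
    simp [← pow_mul, div_pow]
  have hsummand : ∀ j ∈ range (n + 1),
      (n.choose j : ℝ) * (-(Real.exp s ^ w)) ^ j * ∏ l ∈ range r,
          (((j : ℤ) * α l + h - l : ℤ) : ℝ) / qint (Real.exp s) ((j : ℤ) * α l + h - l) =
        (-1) ^ n / bernoulliKernel s ^ r *
          (((-1 : ℤ) ^ (n - j) * n.choose j) • G (0 + j • s)) := by
    intro j hj
    have hjn : j ≤ n := mem_range_succ_iff.1 hj
    have hsign : (-1 : ℝ) ^ j = (-1) ^ n * (-1) ^ (n - j) := by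
      rw [← pow_add, show n + (n - j) = j + 2 * (n - j) by lia, pow_add, pow_mul]
      simp
    rw [neg_pow, mul_assoc, mul_assoc, exp_pow_mul_prod_intCast_div_qint (hnz j hjn) w hs,
      hsign, zsmul_eq_mul, zero_add, nsmul_eq_mul]
    push_cast
    ring
  have hsign_sq : (-1 : ℝ) ^ n * (-1) ^ n = 1 := by simp [← mul_pow]
  rw [changheeBetaPoly, sum_congr rfl hsummand, ← mul_sum, ← fwdDiff_iter_eq_sum_shift, hprefactor]
  linear_combination
    bernoulliKernel s ^ n / bernoulliKernel s ^ r * ((Δ_[s])^[n] G 0 / s ^ n) * hsign_sq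

theorem changhee_tendsto_barnes_general (h : ℤ) (r : ℕ) (α : ℕ → ℤ)
    (hα : ∀ l ∈ range r, α l ≠ 0) (n : ℕ)
    (hnz : ∀ j : ℕ, j ≤ n → ∀ l ∈ range r, (j : ℤ) * α l + h - l ≠ 0)
    (w : ℕ) (b : ℕ → ℝ)
    (hb : ∀ᶠ t : ℝ in 𝓝[≠] 0, HasSum (fun m : ℕ => b m * t ^ m / m.factorial)
      ((∏ l ∈ range r, (α l : ℝ) * t / (Real.exp ((α l : ℝ) * t) - 1)) * Real.exp (w * t))) :
    Tendsto (fun q : ℝ => changheeBetaPoly q h r α w n) (𝓝[≠] 1) (𝓝 (b n)) := by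
  set G := barnesGen r (fun l => α l) (fun l => h - l) w
  have hG : ContDiff ℝ ∞ (Function.uncurry G) := contDiff_uncurry_barnesGen _ _ _ _
  have hcoeff : iteratedDeriv n (G 0) 0 = b n := by
    refine iteratedDeriv_zero_eq_of_hasSum
      (hG.continuous.comp (Continuous.prodMk_right 0)).continuousAt ?_ n
    filter_upwards [hb, self_mem_nhdsWithin] with t ht ht0
    rwa [← barnesGen_zero_of_ne (fun l hl => Int.cast_ne_zero.2 (hα l hl)) (h - ·) w ht0] at ht
  have hdiff : Tendsto (fun s => (Δ_[s])^[n] (G s) 0 / s ^ n) (𝓝[≠] 0) (𝓝 (b n)) :=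
    hcoeff ▸ tendsto_fwdDiff_iter_div_pow (hG.of_le (mod_cast le_top)) 0
  have hkernel : Tendsto bernoulliKernel (𝓝[≠] 0) (𝓝 1) :=
    bernoulliKernel_zero ▸ contDiff_bernoulliKernel.continuous.continuousWithinAt
  have hlog : Tendsto Real.log (𝓝[≠] 1) (𝓝[≠] 0) :=
    Real.log_one ▸ (Real.hasDerivAt_log one_ne_zero).tendsto_nhdsNE (by simp)
  have hlim := (((hkernel.pow n).div (hkernel.pow r) (by simp)).mul hdiff).comp hlog
  simp only [one_pow, div_one, one_mul] at hlim
  refine hlim.congr' ?_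
  filter_upwards [hlog self_mem_nhdsWithin,
    mem_nhdsWithin_of_mem_nhds (lt_mem_nhds one_pos)] with q hq hq0
  simpa [Real.exp_log hq0] using (changheeBetaPoly_exp hnz w hq).symm

theorem changhee_tendsto_barnes (h : ℤ) (r : ℕ) (hr : 1 ≤ r)
    (α : ℕ → ℤ) (hα : ∀ l ∈ Finset.range r, 0 < α l)
    (n : ℕ)
    (hnz : ∀ j : ℕ, j ≤ n → ∀ l ∈ Finset.range r, (j : ℤ) * α l + h - l ≠ 0)
    (B : ℕ → ℝ → ℝ) (ε : ℝ) (hε : 0 < ε)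
    (hB : ∀ x t : ℝ, t ≠ 0 → |t| < ε →
      HasSum (fun m : ℕ => B m x * t ^ m / m.factorial)
        ((∏ j ∈ Finset.range r, (α j : ℝ) * t / (Real.exp ((α j : ℝ) * t) - 1)) *
          Real.exp (x * t)))
    (w : ℕ) :
    Tendsto (fun q : ℝ => changheeBetaPoly q h r α w n)
      (nhdsWithin 1 (Set.Ioo 0 1)) (nhds (B n w)) := by
  refine (changhee_tendsto_barnes_general h r α (fun l hl => (hα l hl).ne') n hnz w (B · w)
    ?_).mono_left (nhdsWithin_mono 1 fun q hq => hq.2.ne)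
  filter_upwards [self_mem_nhdsWithin, mem_nhdsWithin_of_mem_nhds (Metric.ball_mem_nhds 0 hε)]
    with t ht htε using hB w t ht (by simpa using htε)
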